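/- Let 0 ≤ m < n be integers. Then sdepth_S((x_1,...,x_n)/(x_1,...,x_m)) = n - m - ⌊(n-m)/2⌋. -/

import Mathlib

/- Combinatorial formalization of Stanley depth for quotients `J/I` of monomial
ideals in `S = K[x_1,...,x_n]`: monomials are identified with their exponent
vectors in `Fin n → ℕ`, the `ℤⁿ`-graded module `J/I` is identified with the set
of exponent vectors of monomials in `J \ I`, and a Stanley decomposition
`⊕ uᵢ K[Zᵢ]` is identified with a partition of this set into "intervals"
`{b | aᵢ ≤ b ∧ (b = aᵢ outside Zᵢ)}` (the exponent set of `x^{aᵢ} K[Zᵢ]`).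
This correspondence is exact and the resulting Stanley depth is independent of
the field `K`. `sdepthOn V M` is the Stanley depth of `M` as a module over the
polynomial subring on the variables in `V` (e.g. `S' = K[x_2,...,x_n]`). -/

/-- The set of exponent vectors of the Stanley space `x^a · K[Z]`. -/
def SInterval {n : ℕ} (a : Fin n → ℕ) (Z : Finset (Fin n)) : Set (Fin n → ℕ) :=
  {b | a ≤ b ∧ ∀ i ∉ Z, b i = a i}

/-- A (combinatorial) Stanley decomposition of the set `M` of exponent vectors,
using only variables from `V`. -/
def IsStanleyDecompOn {n : ℕ} (V : Finset (Fin n)) (M : Set (Fin n → ℕ)) {r : ℕ}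
    (a : Fin r → Fin n → ℕ) (Z : Fin r → Finset (Fin n)) : Prop :=
  (∀ i, Z i ⊆ V) ∧ (∀ i, SInterval (a i) (Z i) ⊆ M) ∧
    (∀ x ∈ M, ∃ i, x ∈ SInterval (a i) (Z i)) ∧
    ∀ i j, i ≠ j → Disjoint (SInterval (a i) (Z i)) (SInterval (a j) (Z j))

/-- The Stanley depth of `M`, viewed over the polynomial ring on the variables in `V`. -/
noncomputable def sdepthOn {n : ℕ} (V : Finset (Fin n)) (M : Set (Fin n → ℕ)) : ℕ :=
  sSup {d | ∃ (r : ℕ), 0 < r ∧ ∃ (a : Fin r → Fin n → ℕ) (Z : Fin r → Finset (Fin n)),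
    IsStanleyDecompOn V M a Z ∧ ∀ i, d ≤ (Z i).card}

/-- The Stanley depth over the full polynomial ring `S = K[x_1,...,x_n]`. -/
noncomputable def sdepth {n : ℕ} (M : Set (Fin n → ℕ)) : ℕ := sdepthOn Finset.univ M

/-- Exponent vectors of the monomial ideal generated by the monomials `x^a`, `a ∈ A`. -/
def upSet {n : ℕ} (A : Set (Fin n → ℕ)) : Set (Fin n → ℕ) := {c | ∃ a ∈ A, a ≤ c}

/-- `M` is the set of exponent vectors of the monomials of a monomial ideal. -/
def IsMonomialIdealSet {n : ℕ} (M : Set (Fin n → ℕ)) : Prop :=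
  ∀ a ∈ M, ∀ b, a ≤ b → b ∈ M

/-- All monomials of `M` only involve the variables in `V`. -/
def SupportedOn {n : ℕ} (V : Finset (Fin n)) (M : Set (Fin n → ℕ)) : Prop :=
  ∀ c ∈ M, ∀ i ∉ V, c i = 0

/-- The support of a monomial. -/
def msupp {n : ℕ} (u : Fin n → ℕ) : Finset (Fin n) :=
  Finset.univ.filter fun i => u i ≠ 0

/-- A regular sequence of monomials: monic nonunit monomials with pairwise
disjoint supports. -/
def IsRegSeqM {n m : ℕ} (u : Fin m → Fin n → ℕ) : Prop :=
  (∀ j, u j ≠ 0) ∧ ∀ j k, j ≠ k → Disjoint (msupp (u j)) (msupp (u k))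

/-!
Write `T` for the set of variables that survive in the quotient and `k` for their number.

Upper bound: in any Stanley decomposition the generator `x_j` starts its own Stanley space
`x_j K[Z_j]`, and `x_i x_j` cannot lie in both the `i`-th and the `j`-th one. So the relation
"`i ∈ Z_j`" is asymmetric, some `j` has at most `(k - 1) / 2` out-neighbours, and
`#Z_j ≤ 1 + (k - 1) / 2`.

Lower bound: a partition of the nonempty subsets of `T` into Boolean intervals `[X, Y]` gives the
Stanley decomposition with spaces `x^X K[Y]`. Number `T` as `0, …, k - 1` and attach to `A` the
word `q` in which `q j` is the parity of the first element of `A` at or after `j`, continued past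
the last element of `A` by the negated parity of the first element of `A`. The sets with a given
word form the interval from `X = {j | q j ≠ q (j + 1)}` to `Y = {j | q j = j mod 2}`. Two
consecutive positions are never both outside `Y`, and for odd `k` this holds cyclically, so
`#Y ≥ ⌈k / 2⌉`.
-/

open Finset

section AsymmetricRelations

theorem exists_two_mul_card_bipartiteAbove_lt {α : Type*} {R : α → α → Prop}
    [∀ a b, Decidable (R a b)] {T : Finset α} (hT : T.Nonempty)
    (hR : ∀ a ∈ T, ∀ b ∈ T, R a b → ¬R b a) :
    ∃ a ∈ T, 2 * #(T.bipartiteAbove R a) < #T := by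
  classical
  obtain ⟨a, ha, hle⟩ := exists_le_of_sum_le hT
    (sum_card_bipartiteAbove_eq_sum_card_bipartiteBelow R (s := T) (t := T)).le
  refine ⟨a, ha, ?_⟩
  have hdisj : Disjoint (T.bipartiteAbove R a) (T.bipartiteBelow R a) := by
    simp only [disjoint_left, mem_bipartiteAbove, mem_bipartiteBelow]
    exact fun b hab hba => hR a ha b hab.1 hab.2 hba.2
  have hssub : T.bipartiteAbove R a ∪ T.bipartiteBelow R a ⊂ T := by
    refine (ssubset_iff_of_subset ?_).2 ⟨a, ha, ?_⟩
    · exact union_subset (filter_subset _ _) (filter_subset _ _)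
    · have hirrefl : ¬R a a := fun h => hR a ha a ha h h
      simp [mem_bipartiteAbove, mem_bipartiteBelow, hirrefl]
  have hcard := card_lt_card hssub
  rw [card_union_of_disjoint hdisj] at hcard
  omega

end AsymmetricRelations

section StanleyDepth

variable {n r : ℕ} {V T Z : Finset (Fin n)} {M : Set (Fin n → ℕ)} {a : Fin n → ℕ} {j : Fin n}

theorem self_mem_SInterval : a ∈ SInterval a Z :=
  ⟨le_rfl, fun _ _ => rfl⟩

theorem add_single_mem_SInterval (hj : j ∈ Z) : a + Pi.single j 1 ∈ SInterval a Z := by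
  refine ⟨le_self_add, fun i hi => ?_⟩
  have hij : i ≠ j := fun h => hi (h ▸ hj)
  simp [hij]

theorem SupportedOn.subset_of_SInterval_subset (hM : SupportedOn T M)
    (h : SInterval a Z ⊆ M) : Z ⊆ T := by
  intro j hj
  by_contra hjT
  simpa using hM _ (h (add_single_mem_SInterval hj)) j hjT

theorem eq_single_of_single_mem_SInterval (ha : a ≠ 0) (h : Pi.single j 1 ∈ SInterval a Z) :
    a = Pi.single j 1 := by
  have hle := h.1
  have hatom : IsAtom (Pi.single j 1 : Fin n → ℕ) :=
    Pi.isAtom_single (π := fun _ => ℕ) ⟨one_ne_zero, fun _ hb => Nat.lt_one_iff.1 hb⟩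
  exact (hatom.le_iff.1 hle).resolve_left ha

theorem IsStanleyDecompOn.exists_two_mul_card_le {a : Fin r → Fin n → ℕ}
    {Z : Fin r → Finset (Fin n)} (h : IsStanleyDecompOn V M a Z) (hT : T.Nonempty) (h0 : 0 ∉ M)
    (hM : SupportedOn T M) (hsingle : ∀ j ∈ T, Pi.single j 1 ∈ M) :
    ∃ i, 2 * #(Z i) ≤ #T + 1 := by
  classical
  obtain ⟨-, hsub, hcover, hdisj⟩ := h
  have hstart : ∀ j ∈ T, ∃ i, a i = Pi.single j 1 := fun j hj => by
    obtain ⟨i, hi⟩ := hcover _ (hsingle j hj)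
    have hai : a i ≠ 0 := fun h => h0 (h ▸ hsub i self_mem_SInterval)
    exact ⟨i, eq_single_of_single_mem_SInterval hai hi⟩
  have : Nonempty (Fin r) := hT.elim fun j hj => ⟨(hstart j hj).choose⟩
  choose! space hspace using hstart
  have hasymm : ∀ i ∈ T, ∀ j ∈ T, (i ≠ j ∧ j ∈ Z (space i)) → ¬(j ≠ i ∧ i ∈ Z (space j)) := by
    rintro i hi j hj ⟨hij, hji⟩ ⟨-, hij'⟩
    have hne : space i ≠ space j := fun h => by
      have heq : (Pi.single i 1 : Fin n → ℕ) = Pi.single j 1 := by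
        rw [← hspace i hi, h, hspace j hj]
      simpa [hij] using congrFun heq i
    refine Set.disjoint_left.1 (hdisj _ _ hne) (add_single_mem_SInterval hji) ?_
    rw [hspace i hi, add_comm, ← hspace j hj]
    exact add_single_mem_SInterval hij'
  obtain ⟨j, -, hlt⟩ := exists_two_mul_card_bipartiteAbove_lt hT hasymm
  have herase : (Z (space j)).erase j ⊆
      T.bipartiteAbove (fun i j => i ≠ j ∧ j ∈ Z (space i)) j := fun l hl => by
    obtain ⟨hlj, hl⟩ := mem_erase.1 hl
    exact (mem_bipartiteAbove _).2 ⟨hM.subset_of_SInterval_subset (hsub _) hl, hlj.symm, hl⟩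
  have hcard := pred_card_le_card_erase.trans (card_le_card herase)
  exact ⟨space j, by omega⟩

theorem sdepth_le_of_supportedOn (hT : T.Nonempty) (h0 : 0 ∉ M) (hM : SupportedOn T M)
    (hsingle : ∀ j ∈ T, Pi.single j 1 ∈ M) : sdepth M ≤ #T - #T / 2 := by
  refine csSup_le' ?_
  rintro d ⟨r, -, a, Z, hZ, hd⟩
  obtain ⟨i, hi⟩ := hZ.exists_two_mul_card_le hT h0 hM hsingle
  have := hd i
  omega

theorem IsStanleyDecompOn.le_sdepth {a : Fin r → Fin n → ℕ} {Z : Fin r → Finset (Fin n)} {d : ℕ}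
    (h : IsStanleyDecompOn univ M a Z) (hr : 0 < r) (hd : ∀ i, d ≤ #(Z i)) : d ≤ sdepth M := by
  refine le_csSup ⟨n, ?_⟩ ⟨r, hr, a, Z, h, hd⟩
  rintro e ⟨s, hs, b, W, -, he⟩
  exact (he ⟨0, hs⟩).trans (card_finset_fin_le _)

end StanleyDepth

section IntervalPartitions

/-- `P` is an interval partition of the subset `S` of a poset: `S` is the disjoint union of the
nonempty intervals `[x, y]`, `(x, y) ∈ P`. -/
structure IsIntervalPartition {β : Type*} [Preorder β] (S : Set β) (P : Finset (β × β)) :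
    Prop where
  le : ∀ p ∈ P, p.1 ≤ p.2
  Icc_subset : ∀ p ∈ P, Set.Icc p.1 p.2 ⊆ S
  existsUnique : ∀ x ∈ S, ∃! p, p ∈ P ∧ x ∈ Set.Icc p.1 p.2

theorem isIntervalPartition_image {β : Type*} [Preorder β] [DecidableEq β] {S : Finset β}
    {block : β → β × β} (hmem : ∀ x ∈ S, x ∈ Set.Icc (block x).1 (block x).2)
    (hsub : ∀ x ∈ S, Set.Icc (block x).1 (block x).2 ⊆ S)
    (hblock : ∀ x ∈ S, ∀ y ∈ Set.Icc (block x).1 (block x).2, block y = block x) :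
    IsIntervalPartition (S : Set β) (S.image block) where
  le := forall_mem_image.2 fun x hx => (hmem x hx).1.trans (hmem x hx).2
  Icc_subset := forall_mem_image.2 hsub
  existsUnique x hx := by
    refine ⟨block x, ⟨mem_image_of_mem block hx, hmem x hx⟩, ?_⟩
    rintro _ ⟨hp, hxp⟩
    obtain ⟨y, hy, rfl⟩ := mem_image.1 hp
    exact (hblock y hy x hxp).symm

variable {n : ℕ}

theorem mem_SInterval_indicator_iff {X Y : Finset (Fin n)} (hXY : X ⊆ Y) {c : Fin n → ℕ} :
    c ∈ SInterval ((X : Set (Fin n)).indicator 1) Y ↔ msupp c ∈ Set.Icc X Y := by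
  have hcoord : ∀ i, (X : Set (Fin n)).indicator 1 i ≤ c i ∧
      (i ∉ Y → c i = (X : Set (Fin n)).indicator 1 i) ↔ (i ∈ X → c i ≠ 0) ∧ (c i ≠ 0 → i ∈ Y) := by
    intro i
    by_cases hX : i ∈ X
    · simp [hX, hXY hX, Nat.one_le_iff_ne_zero]
    · simp [hX, not_imp_comm]
  simp only [SInterval, Set.mem_ofPred_eq, Pi.le_def, ← forall_and, hcoord]
  simp [forall_and, subset_iff, msupp]

theorem IsIntervalPartition.le_sdepth {S : Set (Finset (Fin n))}
    {P : Finset (Finset (Fin n) × Finset (Fin n))} (hP : IsIntervalPartition S P)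
    (hS : S.Nonempty) {d : ℕ} (hd : ∀ p ∈ P, d ≤ #p.2) : d ≤ sdepth {c | msupp c ∈ S} := by
  let e : Fin #P ≃ P := P.equivFin.symm
  have hmem (i : Fin #P) (c : Fin n → ℕ) :
      c ∈ SInterval (((e i).1.1 : Set (Fin n)).indicator 1) (e i).1.2 ↔
        msupp c ∈ Set.Icc (e i).1.1 (e i).1.2 :=
    mem_SInterval_indicator_iff (hP.le _ (e i).2)
  have hdecomp : IsStanleyDecompOn univ {c | msupp c ∈ S}
      (fun i => ((e i).1.1 : Set (Fin n)).indicator 1) (fun i => (e i).1.2) := by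
    refine ⟨fun i => subset_univ _, fun i c hc => ?_, fun c hc => ?_, fun i j hij => ?_⟩
    · exact hP.Icc_subset _ (e i).2 ((hmem i c).1 hc)
    · obtain ⟨p, ⟨hp, hcp⟩, -⟩ := hP.existsUnique _ hc
      exact ⟨e.symm ⟨p, hp⟩, (hmem _ c).2 (by simpa using hcp)⟩
    · refine Set.disjoint_left.2 fun c hci hcj => hij ?_
      rw [hmem] at hci hcj
      have hcS := hP.Icc_subset _ (e i).2 hci
      exact e.injective <| Subtype.ext <|
        (hP.existsUnique _ hcS).unique ⟨(e i).2, hci⟩ ⟨(e j).2, hcj⟩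
  obtain ⟨A, hA⟩ := hS
  obtain ⟨p, ⟨hp, -⟩, -⟩ := hP.existsUnique A hA
  exact hdecomp.le_sdepth (card_pos.2 ⟨p, hp⟩) fun i => hd _ (e i).2

end IntervalPartitions

section ParityWords

/-- The word `q 0, …, q k` records the parity of the next element of `A ⊆ {0, …, k - 1}`; the last
letter `q k`, for which there is no next element, negates the first one. -/
structure IsNextParity (k : ℕ) (A : Set ℕ) (q : ℕ → Bool) : Prop where
  of_mem : ∀ j < k, j ∈ A → q j = j.bodd
  of_notMem : ∀ j < k, j ∉ A → q j = q (j + 1)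
  antiperiodic : q k = !q 0

open Classical in
/-- The word of `A`, as in `IsNextParity`, read off from the actual next elements; beyond the last
element of `A` it takes the negated parity of the first one. -/
noncomputable def nextParity (A : Set ℕ) (j : ℕ) : Bool :=
  if ∃ i ∈ A, j ≤ i then (sInf {i ∈ A | j ≤ i}).bodd else !(sInf A).bodd

variable {k : ℕ} {A : Set ℕ} {p q : ℕ → Bool}

theorem isNextParity_nextParity (hA : A ⊆ Set.Iio k) (hne : A.Nonempty) :
    IsNextParity k A (nextParity A) where
  of_mem j _ hj := by
    have hmin : IsLeast {i ∈ A | j ≤ i} j := ⟨⟨hj, le_rfl⟩, fun i hi => hi.2⟩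
    rw [nextParity, if_pos ⟨j, hj, le_rfl⟩, hmin.csInf_eq]
  of_notMem j _ hj := by
    have hiff (i : ℕ) : i ∈ A ∧ j ≤ i ↔ i ∈ A ∧ j + 1 ≤ i :=
      and_congr_right fun hi => by have : i ≠ j := fun h => hj (h ▸ hi); omega
    have hset : {i | i ∈ A ∧ j ≤ i} = {i | i ∈ A ∧ j + 1 ≤ i} := Set.ext hiff
    classical exact if_congr (exists_congr hiff) (by rw [hset]) rfl
  antiperiodic := by
    have hlast : ¬∃ i ∈ A, k ≤ i := fun ⟨i, hi, hki⟩ => hki.not_gt (hA hi)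
    have hfirst : ∃ i, i ∈ A := hne
    simp [nextParity, hlast, hfirst]

namespace IsNextParity

theorem eq_of_le_of_eq (hp : IsNextParity k A p) (hq : IsNextParity k A q) {l : ℕ} (hl : l ≤ k)
    (h : p l = q l) {j : ℕ} (hj : j ≤ l) : p j = q j := by
  induction hj using Nat.decreasingInduction with
  | self => exact h
  | of_succ i hi ih =>
    by_cases hA : i ∈ A
    · rw [hp.of_mem i (hi.trans_le hl) hA, hq.of_mem i (hi.trans_le hl) hA]
    · rw [hp.of_notMem i (hi.trans_le hl) hA, hq.of_notMem i (hi.trans_le hl) hA, ih]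

/- The two words agree at an element of `A`, hence to its left down to `0`, hence at `k` by
antiperiodicity, hence everywhere. -/
theorem unique (hp : IsNextParity k A p) (hq : IsNextParity k A q) (hA : A ⊆ Set.Iio k)
    (hne : A.Nonempty) {j : ℕ} (hj : j ≤ k) : p j = q j := by
  obtain ⟨a, ha⟩ := hne
  have hak : a < k := hA ha
  have hpqa : p a = q a := by rw [hp.of_mem a hak ha, hq.of_mem a hak ha]
  have hpq0 : p 0 = q 0 := hp.eq_of_le_of_eq hq hak.le hpqa a.zero_le
  have hpqk : p k = q k := by rw [hp.antiperiodic, hq.antiperiodic, hpq0]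
  exact hp.eq_of_le_of_eq hq le_rfl hpqk hj

theorem succ_eq_bodd (hq : IsNextParity k A q) {j : ℕ} (hj : j < k) (h : q j ≠ j.bodd) :
    q (j + 1) = (j + 1).bodd := by
  have hjA : j ∉ A := fun hA => h (hq.of_mem j hj hA)
  rw [← hq.of_notMem j hj hjA, Nat.bodd_succ, Bool.eq_not]
  exact h

end IsNextParity

theorem exists_ne_succ_of_antiperiodic (hq : q k = !q 0) : ∃ j < k, q j ≠ q (j + 1) := by
  by_contra! hconst
  have hq0 : ∀ j ≤ k, q j = q 0 := by
    intro j
    induction j with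
    | zero => exact fun _ => rfl
    | succ j ih => exact fun hj => (hconst j hj).symm.trans (ih (Nat.le_of_succ_le hj))
  exact Bool.not_ne_self _ (hq.symm.trans (hq0 k le_rfl))

theorem sub_half_le_card_filter_range {good : ℕ → Prop} [DecidablePred good]
    (hsucc : ∀ j, j + 1 < k → ¬good j → good (j + 1))
    (hcyclic : Odd k → ¬good (k - 1) → good 0) :
    k - k / 2 ≤ #{j ∈ range k | good j} := by
  set Y := {j ∈ range k | good j} with hY
  set N := {j ∈ range k | ¬good j} with hN
  have hYN : #Y + #N = k := by rw [card_filter_add_card_filter_not, card_range]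
  have hN' : #(N.image (· + 1)) = #N := card_image_of_injective N (add_left_injective 1)
  have hmaps : N.image (· + 1) ⊆ insert k Y := by
    simp only [image_subset_iff, hY, hN, mem_filter, mem_range, mem_insert, and_imp]
    intro j hj hgood
    rcases (Nat.succ_le_of_lt hj).eq_or_lt with hjk | hjk
    · exact Or.inl hjk
    · exact Or.inr ⟨hjk, hsucc j hjk hgood⟩
  rcases Nat.even_or_odd k with ⟨t, ht⟩ | hodd
  · have := (card_le_card hmaps).trans (card_insert_le k Y)
    omega
  suffices #N ≤ #Y by omega
  by_cases hlast : good (k - 1)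
  · have hk : k ∉ N.image (· + 1) := by
      simp only [hN, mem_image, mem_filter]
      rintro ⟨j, ⟨-, hj⟩, rfl⟩
      exact hj hlast
    exact hN' ▸ card_le_card ((subset_insert_iff_of_notMem hk).1 hmaps)
  · have h0 : 0 ∈ Y := mem_filter.2 ⟨mem_range.2 hodd.pos, hcyclic hodd hlast⟩
    have h0N : N.image (· + 1) ⊆ (insert k Y).erase 0 :=
      subset_erase.2 ⟨hmaps, by simp⟩
    have := card_le_card h0N
    have := card_insert_le k Y
    have := card_erase_of_mem (mem_insert_of_mem h0 : 0 ∈ insert k Y)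
    omega

theorem IsNextParity.sub_half_le_card (hq : IsNextParity k A q) :
    k - k / 2 ≤ #{j ∈ range k | q j = j.bodd} := by
  refine sub_half_le_card_filter_range (fun j hj => hq.succ_eq_bodd (Nat.lt_of_succ_lt hj)) ?_
  intro hodd hlast
  have hk : k - 1 + 1 = k := Nat.sub_add_cancel hodd.pos
  have hqk := hq.succ_eq_bodd (Nat.sub_lt hodd.pos one_pos) hlast
  have hkodd : k.bodd = true := by
    obtain ⟨t, rfl⟩ := hodd
    simp [Nat.bodd_two]
  rw [hk, hq.antiperiodic, hkodd] at hqk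
  simpa using hqk

end ParityWords

section ParityBlocks

variable {α : Type*} {f : α → ℕ} {T A : Finset α} {k : ℕ} {p q : ℕ → Bool}

/-- The endpoints of the interval formed by the subsets of `T` whose word, in the numbering `f` of
the elements of `T`, is `q`. -/
def parityBlock (f : α → ℕ) (T : Finset α) (q : ℕ → Bool) : Finset α × Finset α :=
  ({i ∈ T | q (f i) ≠ q (f i + 1)}, {i ∈ T | q (f i) = (f i).bodd})

theorem parityBlock_congr (hf : Set.MapsTo f T (Set.Iio k)) (h : ∀ j ≤ k, p j = q j) :
    parityBlock f T p = parityBlock f T q := by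
  have hcongr : ∀ i ∈ T, p (f i) = q (f i) ∧ p (f i + 1) = q (f i + 1) :=
    fun i hi => ⟨h _ (hf hi).le, h _ (hf hi)⟩
  refine Prod.ext (filter_congr fun i hi => ?_) (filter_congr fun i hi => ?_)
  · rw [(hcongr i hi).1, (hcongr i hi).2]
  · rw [(hcongr i hi).1]

theorem mem_Icc_parityBlock_iff (hf : Set.BijOn f T (Set.Iio k)) (hA : A ⊆ T)
    (hq : q k = !q 0) :
    A ∈ Set.Icc (parityBlock f T q).1 (parityBlock f T q).2 ↔ IsNextParity k (f '' A) q := by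
  constructor
  · rintro ⟨hlower, hupper⟩
    refine ⟨?_, fun j hj hjA => ?_, hq⟩
    · rintro _ - ⟨i, hi, rfl⟩
      exact (mem_filter.1 (hupper hi)).2
    · obtain ⟨i, hi, rfl⟩ := hf.surjOn hj
      by_contra hne
      exact hjA ⟨i, hlower (mem_filter.2 ⟨hi, hne⟩), rfl⟩
  · intro h
    refine ⟨fun i hi => ?_, fun i hi => ?_⟩
    · obtain ⟨hiT, hne⟩ := mem_filter.1 hi
      have hfi : f i ∈ f '' A := by_contra fun hfi => hne (h.of_notMem _ (hf.mapsTo hiT) hfi)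
      exact (hf.injOn.mem_image_iff hA hiT).1 hfi
    · exact mem_filter.2 ⟨hA hi, h.of_mem _ (hf.mapsTo (hA hi)) ⟨i, hi, rfl⟩⟩

theorem parityBlock_fst_nonempty (hf : Set.SurjOn f T (Set.Iio k)) (hq : q k = !q 0) :
    (parityBlock f T q).1.Nonempty := by
  obtain ⟨j, hj, hne⟩ := exists_ne_succ_of_antiperiodic hq
  obtain ⟨i, hi, rfl⟩ := hf hj
  exact ⟨i, mem_filter.2 ⟨hi, hne⟩⟩

theorem card_parityBlock_snd (hf : Set.BijOn f T (Set.Iio k)) :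
    #(parityBlock f T q).2 = #{j ∈ range k | q j = j.bodd} := by
  refine card_nbij f (fun i hi => ?_) (hf.injOn.mono (filter_subset _ _)) (fun j hj => ?_)
  · obtain ⟨hiT, hi⟩ := mem_filter.1 hi
    exact mem_filter.2 ⟨mem_range.2 (hf.mapsTo hiT), hi⟩
  · obtain ⟨hjk, hj⟩ := mem_filter.1 hj
    obtain ⟨i, hi, rfl⟩ := hf.surjOn (mem_range.1 hjk)
    exact ⟨i, mem_filter.2 ⟨hi, hj⟩, rfl⟩

theorem exists_isIntervalPartition_nonempty_subsets (T : Finset α) :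
    ∃ P : Finset (Finset α × Finset α),
      IsIntervalPartition {A | A.Nonempty ∧ A ⊆ T} P ∧ ∀ p ∈ P, #T - #T / 2 ≤ #p.2 := by
  classical
  obtain ⟨f, hf⟩ : ∃ f : α → ℕ, Set.BijOn f T (Set.Iio #T) :=
    T.finite_toSet.exists_bijOn_of_encard_eq (by simp [← coe_range])
  let word (A : Finset α) : ℕ → Bool := nextParity (f '' A)
  let S : Finset (Finset α) := {A ∈ T.powerset | A.Nonempty}
  have hS {A : Finset α} : A ∈ S ↔ A.Nonempty ∧ A ⊆ T := by simp [S, and_comm]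
  have himage {A : Finset α} (hA : A ∈ S) : f '' A ⊆ Set.Iio #T ∧ (f '' A).Nonempty :=
    ⟨(hf.mapsTo.mono_left (hS.1 hA).2).image_subset, (coe_nonempty.2 (hS.1 hA).1).image f⟩
  have hword {A : Finset α} (hA : A ∈ S) : IsNextParity #T (f '' A) (word A) :=
    isNextParity_nextParity (himage hA).1 (himage hA).2
  have hsub : ∀ A ∈ S,
      Set.Icc (parityBlock f T (word A)).1 (parityBlock f T (word A)).2 ⊆ S := fun A hA B hB =>
    hS.2 ⟨(parityBlock_fst_nonempty hf.surjOn (hword hA).antiperiodic).mono hB.1,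
      hB.2.trans (filter_subset _ _)⟩
  refine ⟨S.image fun A => parityBlock f T (word A), ?_, forall_mem_image.2 fun A hA => ?_⟩
  · have hP := isIntervalPartition_image (block := fun A => parityBlock f T (word A))
      (fun A hA => (mem_Icc_parityBlock_iff hf (hS.1 hA).2 (hword hA).antiperiodic).2 (hword hA))
      hsub fun A hA B hB => by
        have hBS : B ∈ S := hsub A hA hB
        have hBA : IsNextParity #T (f '' B) (word A) :=
          (mem_Icc_parityBlock_iff hf (hS.1 hBS).2 (hword hA).antiperiodic).1 hB
        exact parityBlock_congr hf.mapsTo fun j hj =>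
          (hword hBS).unique hBA (himage hBS).1 (himage hBS).2 hj
    convert hP using 1
    ext A
    exact hS.symm
  · exact (hword hA).sub_half_le_card.trans_eq (card_parityBlock_snd hf).symm

end ParityBlocks

theorem stmt_3_general {n : ℕ} {T : Finset (Fin n)} (hT : T.Nonempty) :
    sdepth ({c : Fin n → ℕ | c ≠ 0} \ {c | ∃ i ∉ T, 0 < c i}) = #T - #T / 2 := by
  refine le_antisymm (sdepth_le_of_supportedOn hT (by simp) ?_ fun j hj => ?_) ?_
  · exact fun c hc i hi => by_contra fun hci => hc.2 ⟨i, hi, Nat.pos_of_ne_zero hci⟩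
  · refine ⟨by simp, ?_⟩
    rintro ⟨i, hi, hpos⟩
    have hij : i ≠ j := fun h => hi (h ▸ hj)
    simp [hij] at hpos
  · obtain ⟨P, hP, hcard⟩ := exists_isIntervalPartition_nonempty_subsets T
    have hset : {c : Fin n → ℕ | c ≠ 0} \ {c | ∃ i ∉ T, 0 < c i} =
        {c | msupp c ∈ {A : Finset (Fin n) | A.Nonempty ∧ A ⊆ T}} := by
      ext c
      simp [msupp, Finset.Nonempty, subset_iff, Function.ne_iff, Nat.pos_iff_ne_zero,
        not_imp_comm]
    exact hset ▸ hP.le_sdepth ⟨T, hT, Subset.rfl⟩ hcard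

/-- `sdepth_S((x_1,...,x_n)/(x_1,...,x_m)) = n - m - ⌊(n-m)/2⌋`
for `0 ≤ m < n`. -/
theorem stmt_3 {n m : ℕ} (hmn : m < n) :
    sdepth ({c : Fin n → ℕ | c ≠ 0} \ {c | ∃ i : Fin n, (i : ℕ) < m ∧ 0 < c i}) =
      n - m - (n - m) / 2 := by
  simpa [Fin.le_def] using stmt_3_general (nonempty_Ici (a := (⟨m, hmn⟩ : Fin n)))
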